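/- Let (▷,σ) be a cocycle datum of associative type for a Hopf algebra H on an algebra B. Define linear maps on B⊗B⊗H by φ(b⊗b'⊗h) := b ⊗ b'σ⁻¹(S(h_{(2)}), h_{(3)}) ⊗ h_{(1)} and ψ(b⊗b'⊗h) := b ⊗ b'(S(h_{(2)})▷σ(h_{(3)}, S(h_{(4)}))) ⊗ h_{(1)}. Then φ and ψ are mutually inverse, and φ intertwines the counits: b(h_{(1)}▷b')(h_{(2)}▷σ⁻¹(S(h_{(5)}), h_{(6)}))σ(h_{(3)}, S(h_{(4)})) = b(h▷b') for all b,b' ∈ B, h ∈ H. -/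

import Mathlib

/-!
Everything follows from three scalar identities for `σ` and `σ⁻¹`:

* `(h₍₁₎ ▷ σ⁻¹(S(h₍₄₎), h₍₅₎)) σ(h₍₂₎, S(h₍₃₎)) = ε(h)` (`CocycleDatum.act_σi_mul_σ_antipode`),
  which gives the counit identity after multiplication by `b(h▷b')`;
* `σ⁻¹(S(h₍₄₎), h₍₅₎) (S(h₍₁₎) ▷ σ(h₍₂₎, S(h₍₃₎))) = ε(h)` (`CocycleDatum.ψφ_scalar`), which gives
  `ψ ∘ φ = id`;
* `(S(h₍₃₎) ▷ σ(h₍₄₎, S(h₍₅₎))) σ⁻¹(S(h₍₁₎), h₍₂₎) = ε(h)` (`CocycleDatum.φψ_scalar`), which gives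
  `φ ∘ ψ = id`.

In the convolution algebra `Hom(H ⊗ H ⊗ H, B)` the cocycle condition reads `A * C = D * E`, where
`A = h▷σ(g,f)`, `C = σ(h,gf)`, `D = σ(h,g)ε(f)`, `E = σ(hg,f)`; all four are invertible, their
inverses being the same expressions in `σ⁻¹`. Hence `A⁻¹ * D = C * E⁻¹` and `D⁻¹ * A = E * C⁻¹`.
Evaluating the first at `h₍₁₎ ⊗ S(h₍₂₎) ⊗ h₍₃₎`, the right-hand side collapses by the antipode
identities and the first scalar identity results; applying `S(h₍₁₎) ▷` to it gives the second, because
`▷` is an action. Evaluating the other one at `S(h₍₁₎) ⊗ h₍₂₎ ⊗ S(h₍₃₎)` gives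
`σ⁻¹(S(h₍₂₎), h₍₃₎) (S(h₍₁₎) ▷ σ(h₍₄₎, S(h₍₅₎))) = ε(h)`. For a datum of associative type,
`h ⊗ g ↦ hg ▷ b` convolution-commutes with `σ⁻¹`, which turns this into the third identity.

Sweedler sums are handled by `sw k x F`, standing for `∑ F(x₍₁₎, x₍₂₎)`: the function `F` is
replaced by the bilinear map with the same values on pairs of basis vectors of `H`. Iterated sums
can then be reassociated and exchanged without checking that the summand is bilinear.
-/

open scoped TensorProduct
open Coalgebra

noncomputable section

section SweedlerDefs

variable (k : Type*) [Field k]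
variable (H : Type*) [Ring H] [Bialgebra k H]

/-- Left-nested triple comultiplication `h ↦ (h₍₁₎ ⊗ h₍₂₎) ⊗ h₍₃₎`. -/
def Δ3 : H →ₗ[k] (H ⊗[k] H) ⊗[k] H :=
  (LinearMap.rTensor H (Coalgebra.comul (R := k) (A := H))) ∘ₗ Coalgebra.comul

/-- Left-nested fourfold comultiplication. -/
def Δ4 : H →ₗ[k] ((H ⊗[k] H) ⊗[k] H) ⊗[k] H :=
  (LinearMap.rTensor H (Δ3 k H)) ∘ₗ Coalgebra.comul

/-- Left-nested fivefold comultiplication. -/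
def Δ5 : H →ₗ[k] (((H ⊗[k] H) ⊗[k] H) ⊗[k] H) ⊗[k] H :=
  (LinearMap.rTensor H (Δ4 k H)) ∘ₗ Coalgebra.comul

/-- Left-nested sixfold comultiplication. -/
def Δ6 : H →ₗ[k] ((((H ⊗[k] H) ⊗[k] H) ⊗[k] H) ⊗[k] H) ⊗[k] H :=
  (LinearMap.rTensor H (Δ5 k H)) ∘ₗ Coalgebra.comul

/-- `IsRep2 k H h h1 h2` says that `Δh = ∑ᵢ h1 i ⊗ h2 i`, i.e. the families `h1, h2`
realise the Sweedler legs `h₍₁₎ ⊗ h₍₂₎`. -/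
def IsRep2 {n : ℕ} (h : H) (h1 h2 : Fin n → H) : Prop :=
  Coalgebra.comul (R := k) h = ∑ i, h1 i ⊗ₜ[k] h2 i

/-- A representation of the Sweedler legs `h₍₁₎ ⊗ h₍₂₎ ⊗ h₍₃₎`. -/
def IsRep3 {n : ℕ} (h : H) (h1 h2 h3 : Fin n → H) : Prop :=
  Δ3 k H h = ∑ i, (h1 i ⊗ₜ[k] h2 i) ⊗ₜ[k] h3 i

/-- A representation of the Sweedler legs `h₍₁₎ ⊗ h₍₂₎ ⊗ h₍₃₎ ⊗ h₍₄₎`. -/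
def IsRep4 {n : ℕ} (h : H) (h1 h2 h3 h4 : Fin n → H) : Prop :=
  Δ4 k H h = ∑ i, ((h1 i ⊗ₜ[k] h2 i) ⊗ₜ[k] h3 i) ⊗ₜ[k] h4 i

/-- A representation of the Sweedler legs `h₍₁₎ ⊗ ⋯ ⊗ h₍₅₎`. -/
def IsRep5 {n : ℕ} (h : H) (h1 h2 h3 h4 h5 : Fin n → H) : Prop :=
  Δ5 k H h = ∑ i, (((h1 i ⊗ₜ[k] h2 i) ⊗ₜ[k] h3 i) ⊗ₜ[k] h4 i) ⊗ₜ[k] h5 i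

/-- A representation of the Sweedler legs `h₍₁₎ ⊗ ⋯ ⊗ h₍₆₎`. -/
def IsRep6 {n : ℕ} (h : H) (h1 h2 h3 h4 h5 h6 : Fin n → H) : Prop :=
  Δ6 k H h = ∑ i, ((((h1 i ⊗ₜ[k] h2 i) ⊗ₜ[k] h3 i) ⊗ₜ[k] h4 i) ⊗ₜ[k] h5 i) ⊗ₜ[k] h6 i

/-- A Drinfeld 2-cocycle `χ : H ⊗ H → k` with convolution inverse `χi`. -/
structure DrinfeldCocycle (χ χi : H →ₗ[k] H →ₗ[k] k) : Prop where
  conv_left : ∀ (h g : H) {n m : ℕ} (h1 h2 : Fin n → H) (g1 g2 : Fin m → H),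
    IsRep2 k H h h1 h2 → IsRep2 k H g g1 g2 →
    ∑ i, ∑ j, χ (h1 i) (g1 j) * χi (h2 i) (g2 j)
      = Coalgebra.counit (R := k) h * Coalgebra.counit (R := k) g
  conv_right : ∀ (h g : H) {n m : ℕ} (h1 h2 : Fin n → H) (g1 g2 : Fin m → H),
    IsRep2 k H h h1 h2 → IsRep2 k H g g1 g2 →
    ∑ i, ∑ j, χi (h1 i) (g1 j) * χ (h2 i) (g2 j)
      = Coalgebra.counit (R := k) h * Coalgebra.counit (R := k) g
  cocycle : ∀ (h g f : H) {n m p : ℕ} (h1 h2 : Fin n → H) (g1 g2 : Fin m → H)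
      (f1 f2 : Fin p → H),
    IsRep2 k H h h1 h2 → IsRep2 k H g g1 g2 → IsRep2 k H f f1 f2 →
    ∑ j, ∑ l, χ (g1 j) (f1 l) * χ h (g2 j * f2 l)
      = ∑ i, ∑ j, χ (h1 i) (g1 j) * χ (h2 i * g2 j) f
  one_cocy : ∀ h : H, χ 1 h = Coalgebra.counit (R := k) h
  cocy_one : ∀ h : H, χ h 1 = Coalgebra.counit (R := k) h

/-- The twisted product `h • g = χ(h₍₁₎,g₍₁₎) h₍₂₎g₍₂₎ χ⁻¹(h₍₃₎,g₍₃₎)` of the Drinfeld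
cotwist `H^χ`, given as a bilinear map `tmul`. -/
def IsTwistedMul (χ χi : H →ₗ[k] H →ₗ[k] k) (tmul : H →ₗ[k] H →ₗ[k] H) : Prop :=
  ∀ (h g : H) {n m : ℕ} (h1 h2 h3 : Fin n → H) (g1 g2 g3 : Fin m → H),
    IsRep3 k H h h1 h2 h3 → IsRep3 k H g g1 g2 g3 →
    tmul h g = ∑ i, ∑ j, (χ (h1 i) (g1 j) * χi (h3 i) (g3 j)) • (h2 i * g2 j)

/-- A coquasitriangular structure `r` on `H`, with convolution inverse `ri`. -/
structure Coquasitriangular (r ri : H →ₗ[k] H →ₗ[k] k) : Prop where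
  conv_left : ∀ (h g : H) {n m : ℕ} (h1 h2 : Fin n → H) (g1 g2 : Fin m → H),
    IsRep2 k H h h1 h2 → IsRep2 k H g g1 g2 →
    ∑ i, ∑ j, r (h1 i) (g1 j) * ri (h2 i) (g2 j)
      = Coalgebra.counit (R := k) h * Coalgebra.counit (R := k) g
  conv_right : ∀ (h g : H) {n m : ℕ} (h1 h2 : Fin n → H) (g1 g2 : Fin m → H),
    IsRep2 k H h h1 h2 → IsRep2 k H g g1 g2 →
    ∑ i, ∑ j, ri (h1 i) (g1 j) * r (h2 i) (g2 j)
      = Coalgebra.counit (R := k) h * Coalgebra.counit (R := k) g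
  braid : ∀ (h g : H) {n m : ℕ} (h1 h2 : Fin n → H) (g1 g2 : Fin m → H),
    IsRep2 k H h h1 h2 → IsRep2 k H g g1 g2 →
    ∑ i, ∑ j, r (h2 i) (g2 j) • (g1 j * h1 i) = ∑ i, ∑ j, r (h1 i) (g1 j) • (h2 i * g2 j)
  mul_right : ∀ (h g f : H) {n : ℕ} (h1 h2 : Fin n → H), IsRep2 k H h h1 h2 →
    r h (g * f) = ∑ i, r (h1 i) g * r (h2 i) f
  mul_left : ∀ (h g f : H) {n : ℕ} (f1 f2 : Fin n → H), IsRep2 k H f f1 f2 →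
    r (h * g) f = ∑ i, r h (f1 i) * r g (f2 i)

variable (B : Type*) [Ring B] [Algebra k B]

/-- `u, ui : H → B` are convolution inverses of each other. -/
def ConvInv (u ui : H →ₗ[k] B) : Prop :=
  ∀ (h : H) {n : ℕ} (h1 h2 : Fin n → H), IsRep2 k H h h1 h2 →
    ∑ i, u (h1 i) * ui (h2 i) = Coalgebra.counit (R := k) h • (1 : B)
    ∧ ∑ i, ui (h1 i) * u (h2 i) = Coalgebra.counit (R := k) h • (1 : B)

/-- A measuring of `H` on `B`:  `h ▷ (ab) = (h₍₁₎ ▷ a)(h₍₂₎ ▷ b)` and `h ▷ 1 = ε(h)1`. -/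
structure Measuring (act : H →ₗ[k] B →ₗ[k] B) : Prop where
  act_mul : ∀ (h : H) (a b : B) {n : ℕ} (h1 h2 : Fin n → H),
    IsRep2 k H h h1 h2 → act h (a * b) = ∑ i, act (h1 i) a * act (h2 i) b
  act_one : ∀ h : H, act h 1 = Coalgebra.counit (R := k) h • (1 : B)

/-- A cocycle datum `(▷, σ)` (with chosen convolution inverse `σi` of `σ`). -/
structure CocycleDatum (act : H →ₗ[k] B →ₗ[k] B) (σ σi : H →ₗ[k] H →ₗ[k] B) : Prop where
  toMeasuring : Measuring k H B act
  conv_left : ∀ (h g : H) {n m : ℕ} (h1 h2 : Fin n → H) (g1 g2 : Fin m → H),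
    IsRep2 k H h h1 h2 → IsRep2 k H g g1 g2 →
    ∑ i, ∑ j, σ (h1 i) (g1 j) * σi (h2 i) (g2 j)
      = (Coalgebra.counit (R := k) h * Coalgebra.counit (R := k) g) • (1 : B)
  conv_right : ∀ (h g : H) {n m : ℕ} (h1 h2 : Fin n → H) (g1 g2 : Fin m → H),
    IsRep2 k H h h1 h2 → IsRep2 k H g g1 g2 →
    ∑ i, ∑ j, σi (h1 i) (g1 j) * σ (h2 i) (g2 j)
      = (Coalgebra.counit (R := k) h * Coalgebra.counit (R := k) g) • (1 : B)
  one_act : ∀ b : B, act 1 b = b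
  act_act : ∀ (h g : H) (b : B) {n m : ℕ} (h1 h2 h3 : Fin n → H) (g1 g2 g3 : Fin m → H),
    IsRep3 k H h h1 h2 h3 → IsRep3 k H g g1 g2 g3 →
    act h (act g b) = ∑ i, ∑ j, σ (h1 i) (g1 j) * act (h2 i * g2 j) b * σi (h3 i) (g3 j)
  sigma_one : ∀ h : H, σ h 1 = Coalgebra.counit (R := k) h • (1 : B)
  one_sigma : ∀ h : H, σ 1 h = Coalgebra.counit (R := k) h • (1 : B)
  cocycle : ∀ (h g f : H) {n m p : ℕ} (h1 h2 : Fin n → H) (g1 g2 : Fin m → H)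
      (f1 f2 : Fin p → H),
    IsRep2 k H h h1 h2 → IsRep2 k H g g1 g2 → IsRep2 k H f f1 f2 →
    ∑ i, ∑ j, ∑ l, act (h1 i) (σ (g1 j) (f1 l)) * σ (h2 i) (g2 j * f2 l)
      = ∑ i, ∑ j, σ (h1 i) (g1 j) * σ (h2 i * g2 j) f

/-- The cocycle cross product multiplication on `P = B ⊗ H`:
`(b#h)(c#g) = b(h₍₁₎▷c)σ(h₍₂₎,g₍₁₎) # h₍₃₎g₍₂₎`, given as a bilinear map `mult`. -/
def IsCrossMul (act : H →ₗ[k] B →ₗ[k] B) (σ : H →ₗ[k] H →ₗ[k] B)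
    (mult : B ⊗[k] H →ₗ[k] B ⊗[k] H →ₗ[k] B ⊗[k] H) : Prop :=
  ∀ (b c : B) (h g : H) {n m : ℕ} (h1 h2 h3 : Fin n → H) (g1 g2 : Fin m → H),
    IsRep3 k H h h1 h2 h3 → IsRep2 k H g g1 g2 →
    mult (b ⊗ₜ[k] h) (c ⊗ₜ[k] g)
      = ∑ i, ∑ j, (b * act (h1 i) c * σ (h2 i) (g1 j)) ⊗ₜ[k] (h3 i * g2 j)

end SweedlerDefs

section HopfDefs

variable (k : Type*) [Field k]
variable (H : Type*) [Ring H] [HopfAlgebra k H]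
variable (B : Type*) [Ring B] [Algebra k B]

/-- The cocycle Hopf algebroid multiplication on `B ⊗ B ⊗ H`:
`(b⊗b'⊗h)(c⊗c'⊗g) = b(h₍₁₎▷c)σ(h₍₂₎,g₍₁₎) ⊗ c'(S(g₍₄₎)▷b')σ(S(g₍₃₎),S(h₍₄₎)) ⊗ h₍₃₎g₍₂₎`,
given as a bilinear map `mult`. -/
def IsAlgebroidMul (act : H →ₗ[k] B →ₗ[k] B) (σ : H →ₗ[k] H →ₗ[k] B)
    (mult : B ⊗[k] (B ⊗[k] H) →ₗ[k] B ⊗[k] (B ⊗[k] H) →ₗ[k] B ⊗[k] (B ⊗[k] H)) : Prop :=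
  ∀ (b b' c c' : B) (h g : H) {n m : ℕ}
    (h1 h2 h3 h4 : Fin n → H) (g1 g2 g3 g4 : Fin m → H),
    IsRep4 k H h h1 h2 h3 h4 → IsRep4 k H g g1 g2 g3 g4 →
    mult (b ⊗ₜ[k] (b' ⊗ₜ[k] h)) (c ⊗ₜ[k] (c' ⊗ₜ[k] g))
      = ∑ i, ∑ j, (b * act (h1 i) c * σ (h2 i) (g1 j)) ⊗ₜ[k]
          ((c' * act (HopfAlgebra.antipode (R := k) (g4 j)) b'
              * σ (HopfAlgebra.antipode (R := k) (g3 j))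
                  (HopfAlgebra.antipode (R := k) (h4 i))) ⊗ₜ[k] (h3 i * g2 j))

end HopfDefs

section Statements

variable {k : Type*} [Field k]
variable {H : Type*} [Ring H] [HopfAlgebra k H]
variable {B : Type*} [Ring B] [Algebra k B]

local notation "𝑺" => HopfAlgebra.antipode (R := k)

/-! ### Linear extension from a basis -/

section SweedlerCalculus

variable (k : Type*) [Field k]
variable {H : Type*} [Ring H]
variable {M N : Type*} [AddCommGroup M] [Module k M] [AddCommGroup N] [Module k N]

section LinearExtension

variable [Algebra k H]

variable (H) in
/-- A fixed basis of `H`. -/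
def legBasis : Module.Basis (Module.Basis.ofVectorSpaceIndex k H) k H :=
  Module.Basis.ofVectorSpace k H

/-- The linear map that agrees with `F` on a fixed basis of `H`; `F` itself is arbitrary, which
makes `linExt` linear in `F` without side conditions. -/
def linExt (F : H → M) : H →ₗ[k] M :=
  (legBasis k H).constr k (fun i => F (legBasis k H i))

lemma linExt_basis (F : H → M) (i) :
    linExt k F (legBasis k H i) = F (legBasis k H i) := by
  simp [linExt]

lemma linExt_eq (F : H → M) (f : H →ₗ[k] M)
    (h : ∀ i, F (legBasis k H i) = f (legBasis k H i)) :
    linExt k F = f :=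
  (legBasis k H).ext fun i => by rw [linExt_basis, h]

lemma linExt_apply {F : H → M} (hF : IsLinearMap k F) (a : H) : linExt k F a = F a := by
  rw [linExt_eq k F hF.mk' fun _ => rfl]; rfl

lemma map_linExt (f : M →ₗ[k] N) (F : H → M) (a : H) :
    f (linExt k F a) = linExt k (fun x => f (F x)) a := by
  rw [linExt_eq k (fun x => f (F x)) (f ∘ₗ linExt k F) fun i => by simp [linExt_basis]]; rfl

lemma linExt_isLinear {F : H → H → M} (hF : ∀ b, IsLinearMap k fun a => F a b) :
    IsLinearMap k fun a => linExt k (F a) where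
  map_add x y := linExt_eq k _ _ fun i => by simp [linExt_basis, (hF _).map_add]
  map_smul c x := linExt_eq k _ _ fun i => by simp [linExt_basis, (hF _).map_smul]

/-- Two-variable version of `linExt`. -/
def linExt2 (F : H → H → M) : H ⊗[k] H →ₗ[k] M :=
  TensorProduct.lift (linExt k fun a => linExt k (F a))

lemma linExt2_eq (F : H → H → M) (f : H ⊗[k] H →ₗ[k] M)
    (h : ∀ i j, F (legBasis k H i) (legBasis k H j)
      = f (legBasis k H i ⊗ₜ legBasis k H j)) :
    linExt2 k F = f := by
  apply ((legBasis k H).tensorProduct (legBasis k H)).ext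
  rintro ⟨i, j⟩
  simp [linExt2, linExt_basis, h]

lemma linExt2_basis (F : H → H → M) (i j) :
    linExt2 k F (legBasis k H i ⊗ₜ legBasis k H j)
      = F (legBasis k H i) (legBasis k H j) := by
  simp [linExt2, linExt_basis]

lemma linExt2_tmul {F : H → H → M} (h1 : ∀ b, IsLinearMap k fun a => F a b)
    (h2 : ∀ a, IsLinearMap k (F a)) (a b : H) : linExt2 k F (a ⊗ₜ b) = F a b := by
  simp [linExt2, linExt_apply k (linExt_isLinear k h1), linExt_apply k (h2 _)]

lemma map_linExt2 (f : M →ₗ[k] N) (F : H → H → M) (z : H ⊗[k] H) :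
    f (linExt2 k F z) = linExt2 k (fun a b => f (F a b)) z := by
  rw [linExt2_eq k (fun a b => f (F a b)) (f ∘ₗ linExt2 k F) fun i j => by
    simp [linExt2_basis]]; rfl

/-- Three-variable version of `linExt`, on left-nested tensors. -/
def linExt3 (F : H → H → H → M) : (H ⊗[k] H) ⊗[k] H →ₗ[k] M :=
  TensorProduct.lift (linExt2 k fun a b => linExt k (F a b))

/-- Four-variable version of `linExt`, on left-nested tensors. -/
def linExt4 (F : H → H → H → H → M) : ((H ⊗[k] H) ⊗[k] H) ⊗[k] H →ₗ[k] M :=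
  TensorProduct.lift (linExt3 k fun a b c => linExt k (F a b c))

/-- Five-variable version of `linExt`, on left-nested tensors. -/
def linExt5 (F : H → H → H → H → H → M) : (((H ⊗[k] H) ⊗[k] H) ⊗[k] H) ⊗[k] H →ₗ[k] M :=
  TensorProduct.lift (linExt4 k fun a b c d => linExt k (F a b c d))

/-- Six-variable version of `linExt`, on left-nested tensors. -/
def linExt6 (F : H → H → H → H → H → H → M) :
    ((((H ⊗[k] H) ⊗[k] H) ⊗[k] H) ⊗[k] H) ⊗[k] H →ₗ[k] M :=
  TensorProduct.lift (linExt5 k fun a b c d e => linExt k (F a b c d e))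

lemma linExt3_tmul {F : H → H → H → M} (h1 : ∀ b c, IsLinearMap k fun a => F a b c)
    (h2 : ∀ a c, IsLinearMap k fun b => F a b c) (h3 : ∀ a b, IsLinearMap k (F a b)) (a b c : H) :
    linExt3 k F ((a ⊗ₜ b) ⊗ₜ c) = F a b c := by
  rw [linExt3, TensorProduct.lift.tmul, linExt2_tmul, linExt_apply k (h3 _ _)]
  · exact fun b => linExt_isLinear k (h1 b)
  · exact fun a => linExt_isLinear k (h2 a)

lemma linExt4_tmul {F : H → H → H → H → M} (h1 : ∀ b c d, IsLinearMap k fun a => F a b c d)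
    (h2 : ∀ a c d, IsLinearMap k fun b => F a b c d)
    (h3 : ∀ a b d, IsLinearMap k fun c => F a b c d)
    (h4 : ∀ a b c, IsLinearMap k (F a b c)) (a b c d : H) :
    linExt4 k F (((a ⊗ₜ b) ⊗ₜ c) ⊗ₜ d) = F a b c d := by
  rw [linExt4, TensorProduct.lift.tmul, linExt3_tmul, linExt_apply k (h4 _ _ _)]
  · exact fun b c => linExt_isLinear k (h1 b c)
  · exact fun a c => linExt_isLinear k (h2 a c)
  · exact fun a b => linExt_isLinear k (h3 a b)

lemma linExt5_tmul {F : H → H → H → H → H → M}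
    (h1 : ∀ b c d e, IsLinearMap k fun a => F a b c d e)
    (h2 : ∀ a c d e, IsLinearMap k fun b => F a b c d e)
    (h3 : ∀ a b d e, IsLinearMap k fun c => F a b c d e)
    (h4 : ∀ a b c e, IsLinearMap k fun d => F a b c d e)
    (h5 : ∀ a b c d, IsLinearMap k (F a b c d)) (a b c d e : H) :
    linExt5 k F ((((a ⊗ₜ b) ⊗ₜ c) ⊗ₜ d) ⊗ₜ e) = F a b c d e := by
  rw [linExt5, TensorProduct.lift.tmul, linExt4_tmul, linExt_apply k (h5 _ _ _ _)]
  · exact fun b c d => linExt_isLinear k (h1 b c d)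
  · exact fun a c d => linExt_isLinear k (h2 a c d)
  · exact fun a b d => linExt_isLinear k (h3 a b d)
  · exact fun a b c => linExt_isLinear k (h4 a b c)

lemma linExt6_tmul {F : H → H → H → H → H → H → M}
    (h1 : ∀ b c d e f, IsLinearMap k fun a => F a b c d e f)
    (h2 : ∀ a c d e f, IsLinearMap k fun b => F a b c d e f)
    (h3 : ∀ a b d e f, IsLinearMap k fun c => F a b c d e f)
    (h4 : ∀ a b c e f, IsLinearMap k fun d => F a b c d e f)
    (h5 : ∀ a b c d f, IsLinearMap k fun e => F a b c d e f)
    (h6 : ∀ a b c d e, IsLinearMap k (F a b c d e)) (a b c d e f : H) :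
    linExt6 k F (((((a ⊗ₜ b) ⊗ₜ c) ⊗ₜ d) ⊗ₜ e) ⊗ₜ f) = F a b c d e f := by
  rw [linExt6, TensorProduct.lift.tmul, linExt5_tmul, linExt_apply k (h6 _ _ _ _ _)]
  · exact fun b c d e => linExt_isLinear k (h1 b c d e)
  · exact fun a c d e => linExt_isLinear k (h2 a c d e)
  · exact fun a b d e => linExt_isLinear k (h3 a b d e)
  · exact fun a b c e => linExt_isLinear k (h4 a b c e)
  · exact fun a b c d => linExt_isLinear k (h5 a b c d)

lemma linExt3_tmul_basis (F : H → H → H → M) (z : H ⊗[k] H) (j) :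
    linExt3 k F (z ⊗ₜ legBasis k H j)
      = linExt2 k (fun a b => F a b (legBasis k H j)) z := by
  rw [linExt3, TensorProduct.lift.tmul, ← LinearMap.applyₗ_apply_apply, map_linExt2]
  simp [linExt_basis]

lemma map_linExt3 (f : M →ₗ[k] N) (F : H → H → H → M) (z : (H ⊗[k] H) ⊗[k] H) :
    f (linExt3 k F z) = linExt3 k (fun a b c => f (F a b c)) z := by
  rw [← LinearMap.comp_apply]
  revert z
  rw [← LinearMap.ext_iff]
  refine TensorProduct.ext (LinearMap.ext fun x => (legBasis k H).ext fun j => ?_)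
  simp [linExt3_tmul_basis, map_linExt2]

lemma linExt4_tmul_basis (F : H → H → H → H → M) (z : (H ⊗[k] H) ⊗[k] H) (j) :
    linExt4 k F (z ⊗ₜ legBasis k H j)
      = linExt3 k (fun a b c => F a b c (legBasis k H j)) z := by
  rw [linExt4, TensorProduct.lift.tmul, ← LinearMap.applyₗ_apply_apply, map_linExt3]
  simp [linExt_basis]

lemma map_linExt4 (f : M →ₗ[k] N) (F : H → H → H → H → M) (z : ((H ⊗[k] H) ⊗[k] H) ⊗[k] H) :
    f (linExt4 k F z) = linExt4 k (fun a b c d => f (F a b c d)) z := by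
  rw [← LinearMap.comp_apply]
  revert z
  rw [← LinearMap.ext_iff]
  refine TensorProduct.ext (LinearMap.ext fun x => (legBasis k H).ext fun j => ?_)
  simp [linExt4_tmul_basis, map_linExt3]

lemma linExt5_tmul_basis (F : H → H → H → H → H → M) (z : ((H ⊗[k] H) ⊗[k] H) ⊗[k] H) (j) :
    linExt5 k F (z ⊗ₜ legBasis k H j)
      = linExt4 k (fun a b c d => F a b c d (legBasis k H j)) z := by
  rw [linExt5, TensorProduct.lift.tmul, ← LinearMap.applyₗ_apply_apply, map_linExt4]
  simp [linExt_basis]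

lemma map_linExt5 (f : M →ₗ[k] N) (F : H → H → H → H → H → M)
    (z : (((H ⊗[k] H) ⊗[k] H) ⊗[k] H) ⊗[k] H) :
    f (linExt5 k F z) = linExt5 k (fun a b c d e => f (F a b c d e)) z := by
  rw [← LinearMap.comp_apply]
  revert z
  rw [← LinearMap.ext_iff]
  refine TensorProduct.ext (LinearMap.ext fun x => (legBasis k H).ext fun j => ?_)
  simp [linExt5_tmul_basis, map_linExt4]

lemma linExt6_tmul_basis (F : H → H → H → H → H → H → M)
    (z : (((H ⊗[k] H) ⊗[k] H) ⊗[k] H) ⊗[k] H) (j) :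
    linExt6 k F (z ⊗ₜ legBasis k H j)
      = linExt5 k (fun a b c d e => F a b c d e (legBasis k H j)) z := by
  rw [linExt6, TensorProduct.lift.tmul, ← LinearMap.applyₗ_apply_apply, map_linExt5]
  simp [linExt_basis]

end LinearExtension

/-! ### Sweedler sums -/

variable [Bialgebra k H]

/-- The Sweedler sum `∑ F(x₍₁₎, x₍₂₎)`, with the legs expanded in a fixed basis of `H`. For
bilinear `F` this is the usual Sweedler sum (`IsRep2.sum_eq`). The basis expansion makes it linear
in both `x` and `F`, coassociative and exchangeable with other Sweedler sums for arbitrary `F`. -/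
def sw (x : H) (F : H → H → M) : M := linExt2 k F (Coalgebra.comul (R := k) x)

lemma sw_eq (x : H) (F : H → H → M) (f : H ⊗[k] H →ₗ[k] M)
    (h : ∀ a b, F a b = f (a ⊗ₜ b)) : sw k x F = f (Coalgebra.comul (R := k) x) := by
  rw [sw, linExt2_eq k F f fun _ _ => h _ _]

@[simp] lemma sw_add_left (x y : H) (F : H → H → M) : sw k (x + y) F = sw k x F + sw k y F := by
  simp [sw]

@[simp] lemma sw_smul_left (c : k) (x : H) (F : H → H → M) : sw k (c • x) F = c • sw k x F := by
  simp [sw]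

@[simp] lemma sw_add_fun (x : H) (F G : H → H → M) :
    sw k x (fun a b => F a b + G a b) = sw k x F + sw k x G := by
  rw [sw, linExt2_eq k _ (linExt2 k F + linExt2 k G) fun i j => by simp [linExt2_basis]]; rfl

@[simp] lemma sw_smul_fun (c : k) (x : H) (F : H → H → M) :
    sw k x (fun a b => c • F a b) = c • sw k x F := by
  rw [sw, linExt2_eq k _ (c • linExt2 k F) fun i j => by simp [linExt2_basis]]; rfl

lemma map_sw (f : M →ₗ[k] N) (x : H) (F : H → H → M) :
    f (sw k x F) = sw k x fun a b => f (F a b) := map_linExt2 k f F _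

lemma sw_apply {X : Type*} (x : H) (F : H → H → X → M) (c : X) :
    sw k x F c = sw k x fun a b => F a b c := map_sw k (LinearMap.proj (φ := fun _ : X => M) c) x F

lemma sw_comm (x y : H) (F : H → H → H → H → M) :
    sw k x (fun a b => sw k y (F a b)) = sw k y fun c d => sw k x fun a b => F a b c d := by
  have := map_sw k (M := H → H → M)
    { toFun := sw k y, map_add' := sw_add_fun k y, map_smul' := fun c => sw_smul_fun k c y } x F
  simp only [LinearMap.coe_mk, AddHom.coe_mk] at this
  rw [← this]
  congr 1; funext c d; rw [sw_apply, sw_apply]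

lemma sw_coassoc (x : H) (F : H → H → H → M) :
    sw k x (fun a b => sw k a fun c d => F c d b) = sw k x fun a b => sw k b fun c d => F a c d := by
  let T : H ⊗[k] (H ⊗[k] H) →ₗ[k] M := TensorProduct.lift (linExt k fun a => linExt2 k (F a))
  have h1 : linExt2 k (fun a b => sw k b fun c d => F a c d)
      = T ∘ₗ LinearMap.lTensor H Coalgebra.comul := linExt2_eq k _ _ fun i j => by
    simp [T, linExt_basis, sw]
  have h2 : linExt2 k (fun a b => sw k a fun c d => F c d b)
      = T ∘ₗ (TensorProduct.assoc k H H H).toLinearMap ∘ₗ LinearMap.rTensor H Coalgebra.comul :=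
    linExt2_eq k _ _ fun i j => by
      rw [sw, linExt2_eq k _ (T ∘ₗ (TensorProduct.assoc k H H H).toLinearMap ∘ₗ
        (TensorProduct.mk k (H ⊗[k] H) H).flip (legBasis k H j)) fun c d => by
          simp [T, linExt_basis, linExt2_basis]]
      simp
  rw [sw, sw, h1, h2]
  simp

/-- Coassociativity for four legs: comultiplying both legs of `Δx` gives the iterated
comultiplication. -/
lemma sw_coassoc' (x : H) (F : H → H → H → H → M) :
    sw k x (fun a b => sw k b fun c d => sw k a fun e f => F e f c d)
      = sw k x fun a y => sw k y fun b z => sw k z fun c d => F a b c d := by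
  have h : (fun a b => sw k b fun c d => sw k a fun e f => F e f c d)
      = fun a b => sw k a fun e f => sw k b fun c d => F e f c d := by
    funext a b
    exact sw_comm k b a fun c d e f => F e f c d
  exact (congrArg (sw k x) h).trans (sw_coassoc k x fun a b z => sw k z fun c d => F a b c d)

lemma sw_counit_left (x : H) (F : H → M) (hF : IsLinearMap k F) :
    sw k x (fun a b => Coalgebra.counit (R := k) a • F b) = F x := by
  rw [sw_eq k x _ (hF.mk' ∘ₗ (TensorProduct.lid k H).toLinearMap ∘ₗ
    LinearMap.rTensor H Coalgebra.counit) fun a b => by simp]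
  simp

lemma sw_counit_right (x : H) (F : H → M) (hF : IsLinearMap k F) :
    sw k x (fun a b => Coalgebra.counit (R := k) b • F a) = F x := by
  rw [sw_eq k x _ (hF.mk' ∘ₗ (TensorProduct.rid k H).toLinearMap ∘ₗ
    LinearMap.lTensor H Coalgebra.counit) fun a b => by simp]
  simp

lemma sw_mul_arg (x y : H) (F : H → H → M) (h1 : ∀ b, IsLinearMap k fun a => F a b)
    (h2 : ∀ a, IsLinearMap k (F a)) :
    sw k (x * y) F = sw k x fun a b => sw k y fun c d => F (a * c) (b * d) := by
  have key : ∀ z w : H ⊗[k] H, linExt2 k F (z * w)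
      = linExt2 k (fun a b => linExt2 k (fun c d => F (a * c) (b * d)) w) z := by
    intro z w
    have hz : linExt2 k (fun a b => linExt2 k (fun c d => F (a * c) (b * d)) w)
        = linExt2 k F ∘ₗ (LinearMap.mul k (H ⊗[k] H)).flip w := linExt2_eq k _ _ fun i j => by
      have hw : linExt2 k (fun c d => F (legBasis k H i * c) (legBasis k H j * d))
          = linExt2 k F ∘ₗ LinearMap.mul k (H ⊗[k] H) (legBasis k H i ⊗ₜ legBasis k H j) :=
        linExt2_eq k _ _ fun c d => by simp [linExt2_tmul k h1 h2]
      rw [hw]; simp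
    rw [hz]; simp
  rw [sw, Bialgebra.comul_mul, key]; rfl

lemma IsRep2.sum_eq {n : ℕ} {h : H} {h1 h2 : Fin n → H} (hr : IsRep2 k H h h1 h2)
    (F : H → H → M) (l1 : ∀ b, IsLinearMap k fun a => F a b) (l2 : ∀ a, IsLinearMap k (F a)) :
    ∑ i, F (h1 i) (h2 i) = sw k h F := by
  rw [sw, hr]; simp [linExt2_tmul k l1 l2]

lemma linExt3_Δ3 (F : H → H → H → M) (x : H) :
    linExt3 k F (Δ3 k H x) = sw k x fun a b => sw k a fun c d => F c d b := by
  rw [sw, linExt2_eq k _ (linExt3 k F ∘ₗ LinearMap.rTensor H Coalgebra.comul) fun i j => by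
    simp [linExt3_tmul_basis, sw]]
  rfl

lemma linExt4_Δ4 (F : H → H → H → H → M) (x : H) :
    linExt4 k F (Δ4 k H x)
      = sw k x fun a b => sw k a fun c d => sw k c fun e f => F e f d b := by
  rw [sw, linExt2_eq k _ (linExt4 k F ∘ₗ LinearMap.rTensor H (Δ3 k H)) fun i j => by
    simp [linExt4_tmul_basis, linExt3_Δ3]]
  rfl

lemma linExt5_Δ5 (F : H → H → H → H → H → M) (x : H) :
    linExt5 k F (Δ5 k H x) = sw k x fun a b => sw k a fun c d => sw k c fun e f =>
      sw k e fun g h => F g h f d b := by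
  rw [sw, linExt2_eq k _ (linExt5 k F ∘ₗ LinearMap.rTensor H (Δ4 k H)) fun i j => by
    simp [linExt5_tmul_basis, linExt4_Δ4]]
  rfl

lemma linExt6_Δ6 (F : H → H → H → H → H → H → M) (x : H) :
    linExt6 k F (Δ6 k H x) = sw k x fun a b => sw k a fun c d => sw k c fun e f =>
      sw k e fun g h => sw k g fun p q => F p q h f d b := by
  rw [sw, linExt2_eq k _ (linExt6 k F ∘ₗ LinearMap.rTensor H (Δ5 k H)) fun i j => by
    simp [linExt6_tmul_basis, linExt5_Δ5]]
  rfl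

lemma IsRep3.sum_eq {n : ℕ} {h : H} {h1 h2 h3 : Fin n → H} (hr : IsRep3 k H h h1 h2 h3)
    (F : H → H → H → M) (l1 : ∀ b c, IsLinearMap k fun a => F a b c)
    (l2 : ∀ a c, IsLinearMap k fun b => F a b c) (l3 : ∀ a b, IsLinearMap k (F a b)) :
    ∑ i, F (h1 i) (h2 i) (h3 i) = sw k h fun a x => sw k x fun b c => F a b c := by
  rw [← sw_coassoc, ← linExt3_Δ3, hr]; simp [linExt3_tmul k l1 l2 l3]

lemma IsRep4.sum_eq {n : ℕ} {h : H} {h1 h2 h3 h4 : Fin n → H} (hr : IsRep4 k H h h1 h2 h3 h4)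
    (F : H → H → H → H → M) (l1 : ∀ b c d, IsLinearMap k fun a => F a b c d)
    (l2 : ∀ a c d, IsLinearMap k fun b => F a b c d)
    (l3 : ∀ a b d, IsLinearMap k fun c => F a b c d) (l4 : ∀ a b c, IsLinearMap k (F a b c)) :
    ∑ i, F (h1 i) (h2 i) (h3 i) (h4 i)
      = sw k h fun a x => sw k x fun b y => sw k y fun c d => F a b c d := by
  have := linExt4_Δ4 k F h
  rw [hr] at this
  simp only [sw_coassoc] at this
  simpa [linExt4_tmul k l1 l2 l3 l4] using this

lemma IsRep6.sum_eq {n : ℕ} {h : H} {h1 h2 h3 h4 h5 h6 : Fin n → H}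
    (hr : IsRep6 k H h h1 h2 h3 h4 h5 h6)
    (F : H → H → H → H → H → H → M) (l1 : ∀ b c d e f, IsLinearMap k fun a => F a b c d e f)
    (l2 : ∀ a c d e f, IsLinearMap k fun b => F a b c d e f)
    (l3 : ∀ a b d e f, IsLinearMap k fun c => F a b c d e f)
    (l4 : ∀ a b c e f, IsLinearMap k fun d => F a b c d e f)
    (l5 : ∀ a b c d f, IsLinearMap k fun e => F a b c d e f)
    (l6 : ∀ a b c d e, IsLinearMap k (F a b c d e)) :
    ∑ i, F (h1 i) (h2 i) (h3 i) (h4 i) (h5 i) (h6 i)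
      = sw k h fun a x => sw k x fun b y => sw k y fun c z => sw k z fun d w =>
          sw k w fun e f => F a b c d e f := by
  have := linExt6_Δ6 k F h
  rw [hr] at this
  rw [map_sum] at this
  simp only [linExt6_tmul k l1 l2 l3 l4 l5 l6] at this
  rw [this]
  -- turn the left-nested comultiplications into right-nested ones
  simp only [sw_coassoc]

attribute [irreducible] sw

lemma span_tmul {ι : Type*} {f : ι → M} (hf : Submodule.span k (Set.range f) = ⊤) :
    Submodule.span k (Set.range fun p : ι × N => f p.1 ⊗ₜ[k] p.2) = ⊤ := by
  rw [eq_top_iff]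
  rintro z -
  induction z with
  | zero => exact Submodule.zero_mem _
  | add x y hx hy => exact Submodule.add_mem _ hx hy
  | tmul x y =>
    have hx : x ∈ Submodule.span k (Set.range f) := hf ▸ Submodule.mem_top
    induction hx using Submodule.span_induction with
    | mem x h => obtain ⟨i, rfl⟩ := h; exact Submodule.subset_span ⟨(i, y), rfl⟩
    | zero => simp
    | add a b _ _ ha hb => rw [TensorProduct.add_tmul]; exact Submodule.add_mem _ ha hb
    | smul c a _ ha => rw [← TensorProduct.smul_tmul']; exact Submodule.smul_mem _ _ ha

lemma exists_fin_sum {ι : Type*} {f : ι → M} (hf : Submodule.span k (Set.range f) = ⊤)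
    (z : M ⊗[k] N) : ∃ (n : ℕ) (i : Fin n → ι) (b : Fin n → N), z = ∑ j, f (i j) ⊗ₜ b j := by
  have hz : z ∈ Submodule.span k (Set.range fun p : ι × N => f p.1 ⊗ₜ[k] p.2) := by
    rw [span_tmul k hf]; exact Submodule.mem_top
  obtain ⟨n, c, g, rfl⟩ := Submodule.mem_span_set'.1 hz
  choose p hp using fun j => (g j).2
  refine ⟨n, fun j => (p j).1, fun j => c j • (p j).2, Finset.sum_congr rfl fun j _ => ?_⟩
  rw [TensorProduct.tmul_smul, ← hp j]

lemma exists_rep2 (h : H) : ∃ (n : ℕ) (h1 h2 : Fin n → H), IsRep2 k H h h1 h2 :=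
  exists_fin_sum k (f := (id : H → H)) (by simp) _

lemma exists_rep3 (h : H) : ∃ (n : ℕ) (h1 h2 h3 : Fin n → H), IsRep3 k H h h1 h2 h3 := by
  obtain ⟨n, p, b, hp⟩ := exists_fin_sum k (span_tmul k (N := H) (f := (id : H → H)) (by simp))
    (Δ3 k H h)
  exact ⟨n, _, _, b, hp⟩

lemma exists_rep4 (h : H) : ∃ (n : ℕ) (h1 h2 h3 h4 : Fin n → H), IsRep4 k H h h1 h2 h3 h4 := by
  have h2 := span_tmul k (M := H) (N := H) (f := id) (by simp)
  have h3 := span_tmul k (M := H ⊗[k] H) (N := H) h2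
  obtain ⟨n, p, b, hp⟩ := exists_fin_sum k h3 (Δ4 k H h)
  exact ⟨n, _, _, _, b, hp⟩

end SweedlerCalculus

/-! ### Antipode and convolution products -/

section HopfCalculus

variable (k)
variable {M : Type*} [AddCommGroup M] [Module k M]

lemma sw_congr {x : H} {F G : H → H → M} (h : ∀ a b, F a b = G a b) : sw k x F = sw k x G :=
  congrArg (sw k x) (funext fun a => funext fun b => h a b)

lemma mul_sw (c : B) (x : H) (F : H → H → B) : c * sw k x F = sw k x fun a b => c * F a b :=
  map_sw k (LinearMap.mulLeft k c) x F

lemma sw_mul (c : B) (x : H) (F : H → H → B) : sw k x F * c = sw k x fun a b => F a b * c :=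
  map_sw k (LinearMap.mulRight k c) x F

lemma sw_one (F : H → H → M) (h1 : ∀ b, IsLinearMap k fun a => F a b)
    (h2 : ∀ a, IsLinearMap k (F a)) : sw k 1 F = F 1 1 := by
  rw [sw, Bialgebra.comul_one, Algebra.TensorProduct.one_def, linExt2_tmul k h1 h2]

lemma sw_antipode_mul (x : H) (F : H → M) (hF : IsLinearMap k F) :
    sw k x (fun a b => F (𝑺 a * b)) = Coalgebra.counit (R := k) x • F 1 := by
  rw [sw_eq k x _ (hF.mk' ∘ₗ LinearMap.mul' k H ∘ₗ LinearMap.rTensor H 𝑺) fun a b => by simp]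
  simp [Algebra.algebraMap_eq_smul_one]

lemma sw_mul_antipode (x : H) (F : H → M) (hF : IsLinearMap k F) :
    sw k x (fun a b => F (a * 𝑺 b)) = Coalgebra.counit (R := k) x • F 1 := by
  rw [sw_eq k x _ (hF.mk' ∘ₗ LinearMap.mul' k H ∘ₗ LinearMap.lTensor H 𝑺) fun a b => by simp]
  simp [Algebra.algebraMap_eq_smul_one]

/-- `F(S(x₍₁₎)x₍₂₎, x₍₃₎) = F(1, x)`. -/
lemma sw_antipode_mul_tail (x : H) (F : H → H → M) (h1 : ∀ b, IsLinearMap k fun a => F a b)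
    (h2 : ∀ a, IsLinearMap k (F a)) :
    sw k x (fun a y => sw k y fun b z => F (𝑺 a * b) z) = F 1 x := by
  rw [← sw_coassoc k x fun a b z => F (𝑺 a * b) z, ← sw_counit_left k x _ (h2 1)]
  exact sw_congr k fun a z => sw_antipode_mul k a _ (h1 z)

/-- `F(x₍₁₎S(x₍₂₎), x₍₃₎) = F(1, x)`. -/
lemma sw_mul_antipode_tail (x : H) (F : H → H → M) (h1 : ∀ b, IsLinearMap k fun a => F a b)
    (h2 : ∀ a, IsLinearMap k (F a)) :
    sw k x (fun a y => sw k y fun b z => F (a * 𝑺 b) z) = F 1 x := by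
  rw [← sw_coassoc k x fun a b z => F (a * 𝑺 b) z, ← sw_counit_left k x _ (h2 1)]
  exact sw_congr k fun a z => sw_mul_antipode k a _ (h1 z)

lemma conv_apply (P Q : H →ₗ[k] B) (x : H) :
    (WithConv.toConv P * WithConv.toConv Q).ofConv x = sw k x fun a b => P a * Q b := by
  rw [sw_eq k x _ (LinearMap.mul' k B ∘ₗ TensorProduct.map P Q) fun a b => by simp]
  simp [LinearMap.convMul_apply]

lemma conv_rep2 (P Q : H ⊗[k] H →ₗ[k] B) {x y : H} {n m : ℕ} {x1 x2 : Fin n → H}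
    {y1 y2 : Fin m → H} (hx : IsRep2 k H x x1 x2) (hy : IsRep2 k H y y1 y2) :
    (WithConv.toConv P * WithConv.toConv Q).ofConv (x ⊗ₜ y)
      = ∑ i, ∑ j, P (x1 i ⊗ₜ y1 j) * Q (x2 i ⊗ₜ y2 j) := by
  rw [LinearMap.convMul_apply, TensorProduct.comul_tmul, hx, hy]
  simp [TensorProduct.sum_tmul, TensorProduct.tmul_sum]
  exact Finset.sum_comm

/-- The convolution product on `Hom(H ⊗ H, B)` in Sweedler form. -/
lemma conv_apply2 (P Q : H ⊗[k] H →ₗ[k] B) (x y : H) :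
    (WithConv.toConv P * WithConv.toConv Q).ofConv (x ⊗ₜ y)
      = sw k x fun a b => sw k y fun c d => P (a ⊗ₜ c) * Q (b ⊗ₜ d) := by
  obtain ⟨n, x1, x2, hx⟩ := exists_rep2 k x
  obtain ⟨m, y1, y2, hy⟩ := exists_rep2 k y
  rw [conv_rep2 k P Q hx hy, ← hx.sum_eq]
  · exact Finset.sum_congr rfl fun i _ =>
      hy.sum_eq k (fun c d => P (x1 i ⊗ₜ c) * Q (x2 i ⊗ₜ d))
        (fun _ => ⟨by simp [TensorProduct.tmul_add, add_mul], by simp⟩)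
        (fun _ => ⟨by simp [TensorProduct.tmul_add, mul_add], by simp⟩)
  · exact fun _ => ⟨by simp [TensorProduct.add_tmul, add_mul], by simp [← TensorProduct.smul_tmul']⟩
  · exact fun _ => ⟨by simp [TensorProduct.add_tmul, mul_add], by simp [← TensorProduct.smul_tmul']⟩

lemma conv_rep3 (P Q : H ⊗[k] (H ⊗[k] H) →ₗ[k] B) {x y z : H} {n m p : ℕ} {x1 x2 : Fin n → H}
    {y1 y2 : Fin m → H} {z1 z2 : Fin p → H} (hx : IsRep2 k H x x1 x2) (hy : IsRep2 k H y y1 y2)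
    (hz : IsRep2 k H z z1 z2) :
    (WithConv.toConv P * WithConv.toConv Q).ofConv (x ⊗ₜ (y ⊗ₜ z))
      = ∑ i, ∑ j, ∑ l, P (x1 i ⊗ₜ (y1 j ⊗ₜ z1 l)) * Q (x2 i ⊗ₜ (y2 j ⊗ₜ z2 l)) := by
  have key : ∀ a b, (∑ j, ∑ l, P (a ⊗ₜ (y1 j ⊗ₜ z1 l)) * Q (b ⊗ₜ (y2 j ⊗ₜ z2 l)))
      = (WithConv.toConv (P ∘ₗ TensorProduct.mk k _ _ a) *
          WithConv.toConv (Q ∘ₗ TensorProduct.mk k _ _ b)).ofConv (y ⊗ₜ z) := fun a b => by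
    rw [conv_rep2 k _ _ hy hz]; rfl
  simp_rw [key]
  rw [LinearMap.convMul_apply, TensorProduct.comul_tmul, hx]
  simp only [LinearMap.convMul_apply]
  generalize Coalgebra.comul (R := k) (y ⊗ₜ[k] z) = w
  induction w with
  | zero => simp
  | add u v hu hv => simp only [TensorProduct.tmul_add, map_add, hu, hv, Finset.sum_add_distrib]
  | tmul u v => simp [TensorProduct.sum_tmul]

/-- The convolution product on `Hom(H ⊗ H ⊗ H, B)` in Sweedler form. -/
lemma conv_apply3 (P Q : H ⊗[k] (H ⊗[k] H) →ₗ[k] B) (x y z : H) :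
    (WithConv.toConv P * WithConv.toConv Q).ofConv (x ⊗ₜ (y ⊗ₜ z))
      = sw k x fun a b => sw k y fun c d => sw k z fun e f =>
          P (a ⊗ₜ (c ⊗ₜ e)) * Q (b ⊗ₜ (d ⊗ₜ f)) := by
  obtain ⟨n, x1, x2, hx⟩ := exists_rep2 k x
  obtain ⟨m, y1, y2, hy⟩ := exists_rep2 k y
  obtain ⟨p, z1, z2, hz⟩ := exists_rep2 k z
  rw [conv_rep3 k P Q hx hy hz, ← hx.sum_eq]
  · refine Finset.sum_congr rfl fun i _ => ?_
    have e := conv_rep2 k (P ∘ₗ TensorProduct.mk k _ _ (x1 i))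
      (Q ∘ₗ TensorProduct.mk k _ _ (x2 i)) hy hz
    rw [conv_apply2] at e
    exact e.symm
  · exact fun _ => ⟨by simp [TensorProduct.add_tmul, add_mul], by simp [← TensorProduct.smul_tmul']⟩
  · exact fun _ => ⟨by simp [TensorProduct.add_tmul, mul_add], by simp [← TensorProduct.smul_tmul']⟩

/-- The antipode is anti-comultiplicative: both `Δ ∘ S` and `(S ⊗ S) ∘ Δᵒᵖ` are convolution
inverses of `Δ`. -/
lemma sw_antipode (x : H) (G : H → H → M) (h1 : ∀ b, IsLinearMap k fun a => G a b)
    (h2 : ∀ a, IsLinearMap k (G a)) :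
    sw k (𝑺 x) G = sw k x fun a b => G (𝑺 b) (𝑺 a) := by
  let T : H →ₗ[k] H ⊗[k] H :=
    TensorProduct.map 𝑺 𝑺 ∘ₗ (TensorProduct.comm k H H).toLinearMap ∘ₗ Coalgebra.comul
  have hT : ∀ y, T y = sw k y fun a b => 𝑺 b ⊗ₜ[k] 𝑺 a := fun y => by
    rw [sw_eq k y _ (TensorProduct.map 𝑺 𝑺 ∘ₗ (TensorProduct.comm k H H).toLinearMap)
      fun a b => by simp]
    rfl
  have hδ : ∀ y : H, Coalgebra.comul (R := k) y = sw k y fun a b => a ⊗ₜ[k] b := fun y => by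
    rw [sw_eq k y _ LinearMap.id fun a b => by simp]; rfl
  have hinv : WithConv.toConv T * WithConv.toConv (Coalgebra.comul (R := k) (A := H)) = 1 := by
    apply WithConv.ofConv_injective
    ext y
    rw [conv_apply, LinearMap.convOne_apply]
    have e : ∀ a b, T a * Coalgebra.comul (R := k) b
        = sw k b fun c d => sw k a fun e f => (𝑺 f * c) ⊗ₜ[k] (𝑺 e * d) := fun a b => by
      rw [hT, hδ, mul_sw]
      refine sw_congr k fun c d => ?_
      rw [sw_mul]
      simp
    rw [sw_congr k e, sw_coassoc' k y fun e f c d => (𝑺 f * c) ⊗ₜ[k] (𝑺 e * d)]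
    rw [sw_congr k fun a y => sw_antipode_mul_tail k y (fun u d => u ⊗ₜ[k] (𝑺 a * d)) _ _]
    · rw [sw_antipode_mul k y (fun u => 1 ⊗ₜ[k] u)]
      · simp [Algebra.algebraMap_eq_smul_one, Algebra.TensorProduct.one_def]
      · exact ⟨by simp [TensorProduct.tmul_add], by simp⟩
    · exact fun _ _ _ => ⟨by simp [TensorProduct.add_tmul], by simp [← TensorProduct.smul_tmul']⟩
    · exact fun _ _ _ => ⟨by simp [TensorProduct.tmul_add, mul_add], by simp⟩
  have heq := left_inv_eq_right_inv hinv LinearMap.comul_right_inv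
  have heq' : Coalgebra.comul (R := k) (𝑺 x) = T x :=
    (LinearMap.congr_fun (congrArg WithConv.ofConv heq) x).symm
  rw [sw, heq', hT, map_sw]
  exact sw_congr k fun a b => linExt2_tmul k h1 h2 _ _

end HopfCalculus

/-! ### The cocycle condition in convolution algebras -/

section CocycleIdentities

open WithConv

lemma Measuring.act_mul_sw {act : H →ₗ[k] B →ₗ[k] B} (hm : Measuring k H B act) (h : H) (x y : B) :
    act h (x * y) = sw k h fun a b => act a x * act b y := by
  obtain ⟨n, h1, h2, hr⟩ := exists_rep2 k h
  rw [hm.act_mul h x y h1 h2 hr, hr.sum_eq k fun a b => act a x * act b y]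
  · exact fun _ => ⟨by simp [add_mul], by simp⟩
  · exact fun _ => ⟨by simp [mul_add], by simp⟩

/-- `h ⊗ g ⊗ f ↦ h ▷ τ(g, f)`. -/
def convA (act : H →ₗ[k] B →ₗ[k] B) (τ : H →ₗ[k] H →ₗ[k] B) : H ⊗[k] (H ⊗[k] H) →ₗ[k] B :=
  TensorProduct.lift (act.compl₂ (TensorProduct.lift τ))

/-- `h ⊗ g ⊗ f ↦ τ(h, gf)`. -/
def convC (τ : H →ₗ[k] H →ₗ[k] B) : H ⊗[k] (H ⊗[k] H) →ₗ[k] B :=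
  TensorProduct.lift (τ.compl₂ (LinearMap.mul' k H))

/-- `h ⊗ g ⊗ f ↦ τ(h, g)ε(f)`. -/
def convD (τ : H →ₗ[k] H →ₗ[k] B) : H ⊗[k] (H ⊗[k] H) →ₗ[k] B :=
  TensorProduct.lift (τ.compl₂
    ((TensorProduct.rid k H).toLinearMap ∘ₗ LinearMap.lTensor H Coalgebra.counit))

/-- `h ⊗ g ⊗ f ↦ τ(hg, f)`. -/
def convE (τ : H →ₗ[k] H →ₗ[k] B) : H ⊗[k] (H ⊗[k] H) →ₗ[k] B :=
  TensorProduct.lift τ ∘ₗ LinearMap.rTensor H (LinearMap.mul' k H) ∘ₗ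
    (TensorProduct.assoc k H H H).symm.toLinearMap

@[simp] lemma convA_tmul (act : H →ₗ[k] B →ₗ[k] B) (τ : H →ₗ[k] H →ₗ[k] B) (h g f : H) :
    convA act τ (h ⊗ₜ (g ⊗ₜ f)) = act h (τ g f) := by simp [convA]

@[simp] lemma convC_tmul (τ : H →ₗ[k] H →ₗ[k] B) (h g f : H) :
    convC τ (h ⊗ₜ (g ⊗ₜ f)) = τ h (g * f) := by simp [convC]

@[simp] lemma convD_tmul (τ : H →ₗ[k] H →ₗ[k] B) (h g f : H) :
    convD τ (h ⊗ₜ (g ⊗ₜ f)) = Coalgebra.counit (R := k) f • τ h g := by simp [convD]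

@[simp] lemma convE_tmul (τ : H →ₗ[k] H →ₗ[k] B) (h g f : H) :
    convE τ (h ⊗ₜ (g ⊗ₜ f)) = τ (h * g) f := by simp [convE]

lemma conv_ext2 {P Q : WithConv (H ⊗[k] H →ₗ[k] B)}
    (h : ∀ x y, P.ofConv (x ⊗ₜ y) = Q.ofConv (x ⊗ₜ y)) : P = Q :=
  WithConv.ofConv_injective (TensorProduct.ext' h)

lemma conv_ext3 {P Q : WithConv (H ⊗[k] (H ⊗[k] H) →ₗ[k] B)}
    (h : ∀ x y z, P.ofConv (x ⊗ₜ (y ⊗ₜ z)) = Q.ofConv (x ⊗ₜ (y ⊗ₜ z))) : P = Q :=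
  WithConv.ofConv_injective (TensorProduct.ext (LinearMap.ext fun x =>
    TensorProduct.ext' fun y z => h x y z))

lemma conv_one_apply2 (x y : H) : (1 : WithConv (H ⊗[k] H →ₗ[k] B)).ofConv (x ⊗ₜ y)
    = (Coalgebra.counit (R := k) x * Coalgebra.counit (R := k) y) • (1 : B) := by
  simp [Algebra.algebraMap_eq_smul_one, mul_comm]

lemma conv_one_apply3 (x y z : H) :
    (1 : WithConv (H ⊗[k] (H ⊗[k] H) →ₗ[k] B)).ofConv (x ⊗ₜ (y ⊗ₜ z))
    = (Coalgebra.counit (R := k) x * (Coalgebra.counit (R := k) y * Coalgebra.counit (R := k) z))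
      • (1 : B) := by
  simp [Algebra.algebraMap_eq_smul_one, mul_comm]

section Inverses

variable {τ τ' : H →ₗ[k] H →ₗ[k] B}
  (hτ : toConv (TensorProduct.lift τ) * toConv (TensorProduct.lift τ') = 1)

include hτ

lemma sw_of_inv (x y : H) : sw k x (fun a b => sw k y fun c d => τ a c * τ' b d)
    = (Coalgebra.counit (R := k) x * Coalgebra.counit (R := k) y) • (1 : B) := by
  rw [← conv_one_apply2, ← hτ, conv_apply2]
  simp

lemma convA_inv {act : H →ₗ[k] B →ₗ[k] B} (hm : Measuring k H B act) :
    toConv (convA act τ) * toConv (convA act τ') = 1 := conv_ext3 fun x y z => by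
  rw [conv_apply3, conv_one_apply3, sw_comm]
  simp only [convA_tmul]
  rw [sw_congr k fun c d => sw_comm k x z fun a b e f => act a (τ c e) * act b (τ' d f)]
  simp only [← hm.act_mul_sw, ← map_sw, sw_of_inv hτ, map_smul, hm.act_one]
  rw [smul_smul, mul_comm]

lemma convC_inv : toConv (convC τ) * toConv (convC τ') = 1 := conv_ext3 fun x y z => by
  rw [conv_apply3, conv_one_apply3]
  simp only [convC_tmul]
  have e : ∀ a b, sw k y (fun c d => sw k z fun e f => τ a (c * e) * τ' b (d * f))
      = sw k (y * z) fun c d => τ a c * τ' b d := fun a b =>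
    (sw_mul_arg k y z (fun c d => τ a c * τ' b d) (fun _ => ⟨by simp [add_mul], by simp⟩)
      (fun _ => ⟨by simp [mul_add], by simp⟩)).symm
  rw [sw_congr k e, sw_of_inv hτ, Bialgebra.counit_mul]

lemma convD_inv : toConv (convD τ) * toConv (convD τ') = 1 := conv_ext3 fun x y z => by
  rw [conv_apply3, conv_one_apply3]
  simp only [convD_tmul]
  have e : ∀ a b c d, sw k z (fun e f => (Coalgebra.counit (R := k) e • τ a c) *
      (Coalgebra.counit (R := k) f • τ' b d)) = Coalgebra.counit (R := k) z • (τ a c * τ' b d) := by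
    intro a b c d
    simp only [smul_mul_assoc]
    exact (sw_counit_left k z (fun f => τ a c * (Coalgebra.counit (R := k) f • τ' b d))
      ⟨by simp [add_smul, mul_add], by simp [mul_smul]⟩).trans (mul_smul_comm _ _ _)
  simp only [e, sw_smul_fun, sw_of_inv hτ]
  rw [smul_smul]
  congr 1; ring

lemma convE_inv : toConv (convE τ) * toConv (convE τ') = 1 := conv_ext3 fun x y z => by
  rw [conv_apply3, conv_one_apply3]
  simp only [convE_tmul]
  rw [← sw_mul_arg k x y (fun a b => sw k z fun e f => τ a e * τ' b f), sw_of_inv hτ,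
    Bialgebra.counit_mul, mul_assoc]
  · exact fun _ => ⟨by simp [add_mul], by simp⟩
  · exact fun _ => ⟨by simp [mul_add], by simp⟩

end Inverses

namespace CocycleDatum

variable {act : H →ₗ[k] B →ₗ[k] B} {σ σi : H →ₗ[k] H →ₗ[k] B}
  (hcd : CocycleDatum k H B act σ σi)

include hcd

lemma σ_mul_σi : toConv (TensorProduct.lift σ) * toConv (TensorProduct.lift σi) = 1 :=
  conv_ext2 fun x y => by
    obtain ⟨n, x1, x2, hx⟩ := exists_rep2 k x
    obtain ⟨m, y1, y2, hy⟩ := exists_rep2 k y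
    rw [conv_rep2 k _ _ hx hy, conv_one_apply2, ← hcd.conv_left x y x1 x2 y1 y2 hx hy]
    simp

lemma σi_mul_σ : toConv (TensorProduct.lift σi) * toConv (TensorProduct.lift σ) = 1 :=
  conv_ext2 fun x y => by
    obtain ⟨n, x1, x2, hx⟩ := exists_rep2 k x
    obtain ⟨m, y1, y2, hy⟩ := exists_rep2 k y
    rw [conv_rep2 k _ _ hx hy, conv_one_apply2, ← hcd.conv_right x y x1 x2 y1 y2 hx hy]
    simp

/-- The cocycle condition as an identity in the convolution algebra `Hom(H ⊗ H ⊗ H, B)`. -/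
lemma conv_cocycle : toConv (convA act σ) * toConv (convC σ)
    = toConv (convD σ) * toConv (convE σ) := conv_ext3 fun x y z => by
  obtain ⟨n, x1, x2, hx⟩ := exists_rep2 k x
  obtain ⟨m, y1, y2, hy⟩ := exists_rep2 k y
  obtain ⟨p, z1, z2, hz⟩ := exists_rep2 k z
  rw [conv_rep3 k _ _ hx hy hz, conv_rep3 k _ _ hx hy hz]
  simp only [convA_tmul, convC_tmul, convD_tmul, convE_tmul, smul_mul_assoc]
  rw [hcd.cocycle x y z x1 x2 y1 y2 z1 z2 hx hy hz]
  refine Finset.sum_congr rfl fun i _ => Finset.sum_congr rfl fun j _ => ?_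
  rw [hz.sum_eq k fun e f => Coalgebra.counit (R := k) e • (σ (x1 i) (y1 j) * σ (x2 i * y2 j) f),
    sw_counit_left k z fun f => σ (x1 i) (y1 j) * σ (x2 i * y2 j) f]
  · exact ⟨by simp [mul_add], by simp⟩
  · exact fun _ => ⟨by simp [add_smul], by simp [mul_smul]⟩
  · refine fun _ => ⟨by simp [mul_add], fun c x => ?_⟩
    simp only [map_smul, mul_smul_comm]
    exact smul_comm _ _ _

/-- `(h₍₁₎ ▷ σ⁻¹(g₍₁₎, f)) σ(h₍₂₎, g₍₂₎) = σ(h₍₁₎, g₍₁₎f₍₁₎) σ⁻¹(h₍₂₎g₍₂₎, f₍₂₎)`. -/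
lemma act_σi_mul_σ (h g f : H) :
    sw k h (fun a b => sw k g fun c d => act a (σi c f) * σ b d)
      = sw k h fun a b => sw k g fun c d => sw k f fun e f' => σ a (c * e) * σi (b * d) f' := by
  have key : toConv (convA act σi) * toConv (convD σ) = toConv (convC σ) * toConv (convE σi) :=
    calc _ = toConv (convA act σi) * (toConv (convD σ) * toConv (convE σ)) * toConv (convE σi) := by
          rw [mul_assoc, mul_assoc, convE_inv hcd.σ_mul_σi, mul_one]
      _ = _ := by
          rw [← hcd.conv_cocycle, ← mul_assoc, convA_inv hcd.σi_mul_σ hcd.toMeasuring, one_mul]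
  have := congrArg (fun P => P.ofConv (h ⊗ₜ (g ⊗ₜ f))) key
  simp only [conv_apply3, convA_tmul, convC_tmul, convD_tmul, convE_tmul, mul_smul_comm] at this
  rw [← this]
  refine sw_congr k fun a b => sw_congr k fun c d => ?_
  exact (sw_counit_right k f (fun e => act a (σi c e) * σ b d) ⟨by simp [add_mul], by simp⟩).symm

/-- `σ⁻¹(h₍₁₎, g₍₁₎) (h₍₂₎ ▷ σ(g₍₂₎, f)) = σ(h₍₁₎g₍₁₎, f₍₁₎) σ⁻¹(h₍₂₎, g₍₂₎f₍₂₎)`. -/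
lemma σi_mul_act_σ (h g f : H) :
    sw k h (fun a b => sw k g fun c d => σi a c * act b (σ d f))
      = sw k h fun a b => sw k g fun c d => sw k f fun e f' => σ (a * c) e * σi b (d * f') := by
  have key : toConv (convD σi) * toConv (convA act σ) = toConv (convE σ) * toConv (convC σi) :=
    calc _ = toConv (convD σi) * (toConv (convA act σ) * toConv (convC σ)) * toConv (convC σi) := by
          rw [mul_assoc, mul_assoc, convC_inv hcd.σ_mul_σi, mul_one]
      _ = _ := by
          rw [hcd.conv_cocycle, ← mul_assoc, convD_inv hcd.σi_mul_σ, one_mul]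
  have := congrArg (fun P => P.ofConv (h ⊗ₜ (g ⊗ₜ f))) key
  simp only [conv_apply3, convA_tmul, convC_tmul, convD_tmul, convE_tmul, smul_mul_assoc] at this
  rw [← this]
  refine sw_congr k fun a b => sw_congr k fun c d => ?_
  exact (sw_counit_left k f (fun e => σi a c * act b (σ d e)) ⟨by simp [mul_add], by simp⟩).symm

/-- For a datum of associative type,
`σ⁻¹(h₍₁₎, g₍₁₎) (h₍₂₎g₍₂₎ ▷ b) = (h₍₁₎g₍₁₎ ▷ b) σ⁻¹(h₍₂₎, g₍₂₎)`. -/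
lemma σi_mul_act (hassoc : ∀ (h g : H) (b : B), act h (act g b) = act (h * g) b) (h g : H) (x : B) :
    sw k h (fun a b => sw k g fun c d => σi a c * act (b * d) x)
      = sw k h fun a b => sw k g fun c d => act (a * c) x * σi b d := by
  let Mx : H ⊗[k] H →ₗ[k] B := act.flip x ∘ₗ LinearMap.mul' k H
  have conj : toConv (TensorProduct.lift σ) *
      (toConv Mx * toConv (TensorProduct.lift σi)) = toConv Mx := conv_ext2 fun h g => by
    obtain ⟨n, h1, h2, h3, hh⟩ := exists_rep3 k h
    obtain ⟨m, g1, g2, g3, hg⟩ := exists_rep3 k g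
    have e1 := hcd.act_act h g x h1 h2 h3 g1 g2 g3 hh hg
    have e2 : ∀ a b c, ∑ j, σ a (g1 j) * act (b * g2 j) x * σi c (g3 j)
        = sw k g fun d y => sw k y fun e f => σ a d * act (b * e) x * σi c f := fun a b c =>
      hg.sum_eq k (fun d e f => σ a d * act (b * e) x * σi c f)
        (fun _ _ => ⟨by simp [add_mul], by simp⟩)
        (fun _ _ => ⟨by simp [mul_add, add_mul], by simp⟩)
        (fun _ _ => ⟨by simp [mul_add], by simp⟩)
    simp only [e2] at e1
    rw [hh.sum_eq k (fun a b c => sw k g fun d y => sw k y fun e f =>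
        σ a d * act (b * e) x * σi c f)
        (fun _ _ => ⟨by simp [add_mul], by simp⟩)
        (fun _ _ => ⟨by simp [mul_add, add_mul], by simp⟩)
        (fun _ _ => ⟨by simp [mul_add], by simp⟩), hassoc] at e1
    have e3 : ∀ y z, (toConv Mx * toConv (TensorProduct.lift σi)).ofConv (y ⊗ₜ z)
        = sw k y fun b c => sw k z fun e f => act (b * e) x * σi c f := fun y z => by
      rw [conv_apply2]; simp [Mx]
    refine (conv_apply2 k (TensorProduct.lift σ)
      (toConv Mx * toConv (TensorProduct.lift σi)).ofConv h g).trans ?_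
    simp only [e3, TensorProduct.lift.tmul, mul_sw, ← mul_assoc]
    refine Eq.trans ?_ (e1.symm.trans (by simp [Mx]))
    exact sw_congr k fun a y => sw_comm k g y _
  have key : toConv (TensorProduct.lift σi) * toConv Mx
      = toConv Mx * toConv (TensorProduct.lift σi) := by
    conv_lhs => rw [← conj]
    rw [← mul_assoc, hcd.σi_mul_σ, one_mul]
  have := congrArg (fun P => P.ofConv (h ⊗ₜ g)) key
  simp only [conv_apply2] at this
  simpa [Mx] using this

lemma one_σi (h : H) : σi 1 h = Coalgebra.counit (R := k) h • (1 : B) := by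
  have := sw_of_inv hcd.σ_mul_σi 1 h
  rw [sw_one k (fun a b => sw k h fun c d => σ a c * σi b d)
    (fun _ => ⟨by simp [add_mul], by simp⟩) (fun _ => ⟨by simp [mul_add], by simp⟩)] at this
  simpa [hcd.one_sigma, sw_counit_left k h (σi 1) (σi 1).isLinear] using this

lemma σi_one (h : H) : σi h 1 = Coalgebra.counit (R := k) h • (1 : B) := by
  have := sw_of_inv hcd.σ_mul_σi h 1
  rw [sw_congr k fun a b => sw_one k (fun c d => σ a c * σi b d)
    (fun _ => ⟨by simp [add_mul], by simp⟩) (fun _ => ⟨by simp [mul_add], by simp⟩)] at this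
  simpa [hcd.sigma_one, sw_counit_left k h (fun b => σi b 1) (σi.flip 1).isLinear] using this

end CocycleDatum

end CocycleIdentities

/-! ### Evaluation at antipodes -/

section AntipodeEvaluations

variable {M : Type*} [AddCommGroup M] [Module k M]

/-- Coassociativity for five legs: comultiplying the first two legs of `h₍₁₎ ⊗ h₍₂₎ ⊗ h₍₃₎`. -/
lemma sw_regroup (h : H) (F : H → H → H → H → H → M) :
    sw k h (fun a y => sw k y fun b c => sw k a fun a1 a2 => sw k b fun b1 b2 => F a1 a2 b1 b2 c)
      = sw k h fun a1 t => sw k t fun a2 u => sw k u fun b1 v => sw k v fun b2 c =>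
          F a1 a2 b1 b2 c := by
  have e : ∀ a y, sw k y (fun b c => sw k a fun a1 a2 => sw k b fun b1 b2 => F a1 a2 b1 b2 c)
      = sw k a fun a1 a2 => sw k y fun b c => sw k b fun b1 b2 => F a1 a2 b1 b2 c := fun a y =>
    sw_comm k y a fun b c a1 a2 => sw k b fun b1 b2 => F a1 a2 b1 b2 c
  rw [sw_congr k e, sw_coassoc k h fun a1 a2 y => sw k y fun b c => sw k b fun b1 b2 =>
    F a1 a2 b1 b2 c]
  exact sw_congr k fun a1 t => sw_congr k fun a2 u => sw_coassoc k u (F a1 a2)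

namespace CocycleDatum

variable {act : H →ₗ[k] B →ₗ[k] B} {σ σi : H →ₗ[k] H →ₗ[k] B}
  (hcd : CocycleDatum k H B act σ σi)

include hcd

/-- `(h₍₁₎ ▷ σ⁻¹(S(h₍₄₎), h₍₅₎)) σ(h₍₂₎, S(h₍₃₎)) = ε(h)`. -/
lemma act_σi_mul_σ_antipode (h : H) :
    sw k h (fun l1 t => sw k t fun l2 u => sw k u fun l3 v => sw k v fun l4 l5 =>
      act l1 (σi (𝑺 l4) l5) * σ l2 (𝑺 l3)) = Coalgebra.counit (R := k) h • (1 : B) := by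
  have e1 : ∀ a b c, sw k a (fun a1 a2 => sw k b fun b1 b2 => act a1 (σi (𝑺 b2) c) * σ a2 (𝑺 b1))
      = sw k a fun a1 a2 => sw k b fun b1 b2 => sw k c fun c1 c2 =>
          σ a1 (𝑺 b2 * c1) * σi (a2 * 𝑺 b1) c2 := by
    intro a b c
    have := hcd.act_σi_mul_σ a (𝑺 b) c
    rw [sw_congr k fun a1 a2 => sw_antipode k b (fun p q => act a1 (σi p c) * σ a2 q) _ _,
      sw_congr k fun a1 a2 => sw_antipode k b (fun p q => sw k c fun c1 c2 =>
        σ a1 (p * c1) * σi (a2 * q) c2) _ _] at this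
    · exact this
    · exact fun _ _ _ => ⟨by simp [add_mul], by simp⟩
    · exact fun _ _ _ => ⟨by simp [mul_add], by simp⟩
    · exact fun _ _ _ => ⟨by simp [add_mul], by simp⟩
    · exact fun _ _ _ => ⟨by simp [mul_add], by simp⟩
  rw [← sw_regroup h fun l1 l2 l3 l4 l5 => act l1 (σi (𝑺 l4) l5) * σ l2 (𝑺 l3),
    sw_congr k fun a y => sw_congr k fun b c => e1 a b c,
    sw_regroup h fun l1 l2 l3 l4 c => sw k c fun l5 l6 => σ l1 (𝑺 l4 * l5) * σi (l2 * 𝑺 l3) l6]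
  have e2 : ∀ l1 l2 l3 v, sw k v (fun l4 c => sw k c fun l5 l6 =>
      σ l1 (𝑺 l4 * l5) * σi (l2 * 𝑺 l3) l6) = σ l1 1 * σi (l2 * 𝑺 l3) v := fun l1 l2 l3 v =>
    sw_antipode_mul_tail k v (fun p l6 => σ l1 p * σi (l2 * 𝑺 l3) l6)
      (fun _ => ⟨by simp [add_mul], by simp⟩) (fun _ => ⟨by simp [mul_add], by simp⟩)
  have e3 : ∀ l1 t, sw k t (fun l2 u => sw k u fun l3 v => σ l1 1 * σi (l2 * 𝑺 l3) v)
      = σ l1 1 * σi 1 t := fun l1 t =>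
    sw_mul_antipode_tail k t (fun p v => σ l1 1 * σi p v)
      (fun _ => ⟨by simp [mul_add], by simp⟩) (fun _ => ⟨by simp [mul_add], by simp⟩)
  simp only [e2, e3]
  simp only [hcd.sigma_one, hcd.one_σi, smul_mul_assoc, one_mul]
  exact sw_counit_left k h (fun t => Coalgebra.counit (R := k) t • (1 : B))
    ⟨by simp [add_smul], by simp [mul_smul]⟩

/-- `σ⁻¹(S(h₍₂₎), h₍₃₎) (S(h₍₁₎) ▷ σ(h₍₄₎, S(h₍₅₎))) = ε(h)`. -/
lemma σi_mul_act_σ_antipode (h : H) :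
    sw k h (fun l1 t => sw k t fun l2 u => sw k u fun l3 v => sw k v fun l4 l5 =>
      σi (𝑺 l2) l3 * act (𝑺 l1) (σ l4 (𝑺 l5))) = Coalgebra.counit (R := k) h • (1 : B) := by
  have e1 : ∀ a b c, sw k a (fun a1 a2 => sw k b fun b1 b2 =>
        σi (𝑺 a2) b1 * act (𝑺 a1) (σ b2 (𝑺 c)))
      = sw k a fun a1 a2 => sw k b fun b1 b2 => sw k c fun c1 c2 =>
          σ (𝑺 a2 * b1) (𝑺 c2) * σi (𝑺 a1) (b2 * 𝑺 c1) := by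
    intro a b c
    have := hcd.σi_mul_act_σ (𝑺 a) b (𝑺 c)
    rw [sw_antipode k a, sw_antipode k a] at this
    · rw [this]
      refine sw_congr k fun a1 a2 => sw_congr k fun b1 b2 => sw_antipode k c
        (fun p q => σ (𝑺 a2 * b1) p * σi (𝑺 a1) (b2 * q)) ?_ ?_
      · exact fun _ => ⟨by simp [add_mul], by simp⟩
      · exact fun _ => ⟨by simp [mul_add], by simp⟩
    · exact fun _ => ⟨by simp [add_mul], by simp⟩
    · exact fun _ => ⟨by simp [mul_add], by simp⟩
    · exact fun _ => ⟨by simp [add_mul], by simp⟩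
    · exact fun _ => ⟨by simp [mul_add], by simp⟩
  rw [← sw_regroup h fun l1 l2 l3 l4 l5 => σi (𝑺 l2) l3 * act (𝑺 l1) (σ l4 (𝑺 l5)),
    sw_congr k fun a y => sw_congr k fun b c => e1 a b c,
    sw_regroup h fun l1 l2 l3 l4 c => sw k c fun l5 l6 =>
      σ (𝑺 l2 * l3) (𝑺 l6) * σi (𝑺 l1) (l4 * 𝑺 l5)]
  have e2 : ∀ l1 l2 l3 v, sw k v (fun l4 c => sw k c fun l5 l6 =>
      σ (𝑺 l2 * l3) (𝑺 l6) * σi (𝑺 l1) (l4 * 𝑺 l5)) = σ (𝑺 l2 * l3) (𝑺 v) * σi (𝑺 l1) 1 :=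
    fun l1 l2 l3 v =>
      sw_mul_antipode_tail k v (fun p l6 => σ (𝑺 l2 * l3) (𝑺 l6) * σi (𝑺 l1) p)
        (fun _ => ⟨by simp [mul_add], by simp⟩) (fun _ => ⟨by simp [add_mul], by simp⟩)
  have e3 : ∀ l1 t, sw k t (fun l2 u => sw k u fun l3 v => σ (𝑺 l2 * l3) (𝑺 v) * σi (𝑺 l1) 1)
      = σ 1 (𝑺 t) * σi (𝑺 l1) 1 := fun l1 t =>
    sw_antipode_mul_tail k t (fun p v => σ p (𝑺 v) * σi (𝑺 l1) 1)
      (fun _ => ⟨by simp [add_mul], by simp⟩) (fun _ => ⟨by simp [add_mul], by simp⟩)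
  simp only [e2, e3]
  simp only [hcd.one_sigma, hcd.σi_one, HopfAlgebra.counit_antipode, smul_mul_assoc,
    one_mul]
  exact sw_counit_right k h (fun t => Coalgebra.counit (R := k) t • (1 : B))
    ⟨by simp [add_smul], by simp [mul_smul]⟩

/-- `σ⁻¹(S(h₍₂₎), h₍₃₎) (S(h₍₁₎)h₍₄₎ ▷ b) = b σ⁻¹(S(h₍₁₎), h₍₂₎)`. -/
lemma σi_mul_act_antipode (hassoc : ∀ (h g : H) (b : B), act h (act g b) = act (h * g) b)
    (h : H) (x : B) :
    sw k h (fun l1 t => sw k t fun l2 u => sw k u fun l3 l4 =>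
      σi (𝑺 l2) l3 * act (𝑺 l1 * l4) x) = sw k h fun l1 l2 => x * σi (𝑺 l1) l2 := by
  have e1 : ∀ a c, sw k c (fun c1 c2 => sw k a fun a1 a2 => σi (𝑺 a2) c1 * act (𝑺 a1 * c2) x)
      = sw k c fun c1 c2 => sw k a fun a1 a2 => act (𝑺 a2 * c1) x * σi (𝑺 a1) c2 := by
    intro a c
    have := hcd.σi_mul_act hassoc (𝑺 a) c x
    rw [sw_antipode k a, sw_antipode k a] at this
    · rw [sw_comm k c a fun c1 c2 a1 a2 => σi (𝑺 a2) c1 * act (𝑺 a1 * c2) x,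
        sw_comm k c a fun c1 c2 a1 a2 => act (𝑺 a2 * c1) x * σi (𝑺 a1) c2]
      exact this
    · exact fun _ => ⟨by simp [add_mul], by simp⟩
    · exact fun _ => ⟨by simp [mul_add], by simp⟩
    · exact fun _ => ⟨by simp [add_mul], by simp⟩
    · exact fun _ => ⟨by simp [mul_add, add_mul], by simp⟩
  rw [← sw_coassoc' k h fun l1 l2 l3 l4 => σi (𝑺 l2) l3 * act (𝑺 l1 * l4) x,
    sw_congr k fun a c => e1 a c,
    sw_coassoc' k h fun l1 l2 l3 l4 => act (𝑺 l2 * l3) x * σi (𝑺 l1) l4]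
  refine sw_congr k fun l1 t => ?_
  rw [sw_antipode_mul_tail k t fun p l4 => act p x * σi (𝑺 l1) l4, hcd.one_act]
  · exact fun _ => ⟨by simp [add_mul], by simp⟩
  · exact fun _ => ⟨by simp [mul_add], by simp⟩

/-- `σ⁻¹(S(h₍₄₎), h₍₅₎) (S(h₍₁₎) ▷ σ(h₍₂₎, S(h₍₃₎))) = ε(h)`: apply `S(h₍₁₎) ▷` to
`act_σi_mul_σ_antipode` at `h₍₂₎`, distribute over the product and cancel
`S(h₍₂₎)h₍₃₎` in `S(h₍₂₎) ▷ (h₍₃₎ ▷ _) = S(h₍₂₎)h₍₃₎ ▷ _`. -/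
lemma ψφ_scalar (hassoc : ∀ (h g : H) (b : B), act h (act g b) = act (h * g) b) (h : H) :
    sw k h (fun l1 t => sw k t fun l2 u => sw k u fun l3 v => sw k v fun l4 l5 =>
      σi (𝑺 l4) l5 * act (𝑺 l1) (σ l2 (𝑺 l3))) = Coalgebra.counit (R := k) h • (1 : B) := by
  have e0 : sw k h (fun a y => act (𝑺 a) (Coalgebra.counit (R := k) y • (1 : B)))
      = Coalgebra.counit (R := k) h • (1 : B) := by
    simp only [map_smul, hcd.toMeasuring.act_one, HopfAlgebra.counit_antipode]
    exact sw_counit_right k h (fun t => Coalgebra.counit (R := k) t • (1 : B))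
      ⟨by simp [add_smul], by simp [mul_smul]⟩
  rw [← e0]
  simp only [← hcd.act_σi_mul_σ_antipode, map_sw]
  have e1 : ∀ a l1 l2 l3 l4 l5, act (𝑺 a) (act l1 (σi (𝑺 l4) l5) * σ l2 (𝑺 l3))
      = sw k a fun a1 a2 => act (𝑺 a2 * l1) (σi (𝑺 l4) l5) * act (𝑺 a1) (σ l2 (𝑺 l3)) := by
    intro a l1 l2 l3 l4 l5
    rw [hcd.toMeasuring.act_mul_sw, sw_antipode k a]
    · simp only [hassoc]
    · exact fun _ => ⟨by simp [add_mul], by simp⟩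
    · exact fun _ => ⟨by simp [mul_add], by simp⟩
  simp only [e1]
  -- move the comultiplication of the first leg to the front
  have e2 : ∀ a y, sw k y (fun l1 t => sw k t fun l2 u => sw k u fun l3 v => sw k v fun l4 l5 =>
        sw k a fun a1 a2 => act (𝑺 a2 * l1) (σi (𝑺 l4) l5) * act (𝑺 a1) (σ l2 (𝑺 l3)))
      = sw k a fun a1 a2 => sw k y fun l1 t => sw k t fun l2 u => sw k u fun l3 v =>
          sw k v fun l4 l5 => act (𝑺 a2 * l1) (σi (𝑺 l4) l5) * act (𝑺 a1) (σ l2 (𝑺 l3)) := by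
    intro a y
    simp_rw [sw_comm k _ a]
  rw [sw_congr k e2, sw_coassoc k h fun a1 a2 y => sw k y fun l1 t => sw k t fun l2 u =>
    sw k u fun l3 v => sw k v fun l4 l5 =>
      act (𝑺 a2 * l1) (σi (𝑺 l4) l5) * act (𝑺 a1) (σ l2 (𝑺 l3))]
  refine sw_congr k fun a1 y => Eq.symm ?_
  rw [sw_antipode_mul_tail k y fun p t => sw k t fun l2 u => sw k u fun l3 v => sw k v fun l4 l5 =>
      act p (σi (𝑺 l4) l5) * act (𝑺 a1) (σ l2 (𝑺 l3))]
  · simp only [hcd.one_act]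
  · exact fun _ => ⟨by simp [add_mul], by simp⟩
  · exact fun _ => ⟨by simp, by simp⟩

/-- `(S(h₍₃₎) ▷ σ(h₍₄₎, S(h₍₅₎))) σ⁻¹(S(h₍₁₎), h₍₂₎) = ε(h)`: move `σ⁻¹` to the left with
`σi_mul_act_antipode` and use `σi_mul_act_σ_antipode`. -/
lemma φψ_scalar (hassoc : ∀ (h g : H) (b : B), act h (act g b) = act (h * g) b) (h : H) :
    sw k h (fun l1 t => sw k t fun l2 u => sw k u fun l3 v => sw k v fun l4 l5 =>
      act (𝑺 l3) (σ l4 (𝑺 l5)) * σi (𝑺 l1) l2) = Coalgebra.counit (R := k) h • (1 : B) := by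
  rw [← hcd.σi_mul_act_σ_antipode h,
    ← sw_coassoc k h fun l1 l2 u => sw k u fun l3 v => sw k v fun l4 l5 =>
      act (𝑺 l3) (σ l4 (𝑺 l5)) * σi (𝑺 l1) l2]
  have e1 : ∀ x u, sw k x (fun l1 l2 => sw k u fun l3 v => sw k v fun l4 l5 =>
        act (𝑺 l3) (σ l4 (𝑺 l5)) * σi (𝑺 l1) l2)
      = sw k x fun l1 t => sw k t fun l2 s => sw k s fun l3 l4 => sw k u fun m1 v =>
          sw k v fun m2 m3 => σi (𝑺 l2) l3 * act (𝑺 l1 * (l4 * 𝑺 m1)) (σ m2 (𝑺 m3)) := by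
    intro x u
    have := hcd.σi_mul_act_antipode hassoc x
      (sw k u fun l3 v => sw k v fun l4 l5 => act (𝑺 l3) (σ l4 (𝑺 l5)))
    simp only [sw_mul, map_sw, mul_sw, hassoc, mul_assoc] at this
    exact this.symm
  rw [sw_congr k e1]
  rw [sw_coassoc k h fun l1 t u => sw k t fun l2 s => sw k s fun l3 l4 => sw k u fun m1 v =>
          sw k v fun m2 m3 => σi (𝑺 l2) l3 * act (𝑺 l1 * (l4 * 𝑺 m1)) (σ m2 (𝑺 m3))]
  refine sw_congr k fun l1 y => ?_
  rw [sw_coassoc k y fun l2 s u => sw k s fun l3 l4 => sw k u fun m1 v =>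
          sw k v fun m2 m3 => σi (𝑺 l2) l3 * act (𝑺 l1 * (l4 * 𝑺 m1)) (σ m2 (𝑺 m3))]
  refine sw_congr k fun l2 z => ?_
  rw [sw_coassoc k z fun l3 l4 u => sw k u fun m1 v =>
          sw k v fun m2 m3 => σi (𝑺 l2) l3 * act (𝑺 l1 * (l4 * 𝑺 m1)) (σ m2 (𝑺 m3))]
  refine sw_congr k fun l3 w => ?_
  rw [sw_mul_antipode_tail k w fun p v =>
    sw k v fun m2 m3 => σi (𝑺 l2) l3 * act (𝑺 l1 * p) (σ m2 (𝑺 m3))]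
  · simp only [mul_one]
  · exact fun _ => ⟨by simp [mul_add], by simp⟩
  · exact fun _ => ⟨by simp, by simp⟩

end CocycleDatum

end AntipodeEvaluations

/-! ### The maps `φ` and `ψ` -/
/-- Lemma 3.11: in the associative-type case, the maps
`φ(b⊗b'⊗h) = b ⊗ b'σ⁻¹(S(h₍₂₎),h₍₃₎) ⊗ h₍₁₎` and
`ψ(b⊗b'⊗h) = b ⊗ b'(S(h₍₂₎)▷σ(h₍₃₎,S(h₍₄₎))) ⊗ h₍₁₎` are mutually inverse and `φ`
intertwines the counits. -/
theorem statement15 (act : H →ₗ[k] B →ₗ[k] B) (σ σi : H →ₗ[k] H →ₗ[k] B)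
    (hcd : CocycleDatum k H B act σ σi)
    (hassoc : ∀ (h g : H) (b : B), act h (act g b) = act (h * g) b)
    (φ ψ : B ⊗[k] (B ⊗[k] H) →ₗ[k] B ⊗[k] (B ⊗[k] H))
    (hφ : ∀ (b b' : B) (h : H) {n : ℕ} (h1 h2 h3 : Fin n → H), IsRep3 k H h h1 h2 h3 →
      φ (b ⊗ₜ[k] (b' ⊗ₜ[k] h))
        = ∑ i, b ⊗ₜ[k] ((b' * σi (𝑺 (h2 i)) (h3 i)) ⊗ₜ[k] h1 i))
    (hψ : ∀ (b b' : B) (h : H) {n : ℕ} (h1 h2 h3 h4 : Fin n → H), IsRep4 k H h h1 h2 h3 h4 →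
      ψ (b ⊗ₜ[k] (b' ⊗ₜ[k] h))
        = ∑ i, b ⊗ₜ[k] ((b' * act (𝑺 (h2 i)) (σ (h3 i) (𝑺 (h4 i)))) ⊗ₜ[k] h1 i)) :
    -- φ and ψ are mutually inverse
    (∀ X : B ⊗[k] (B ⊗[k] H), φ (ψ X) = X ∧ ψ (φ X) = X)
    ∧
    -- φ intertwines the counits:
    -- b(h₍₁₎▷b')(h₍₂₎▷σ⁻¹(S(h₍₅₎),h₍₆₎))σ(h₍₃₎,S(h₍₄₎)) = b(h▷b')
    (∀ (b b' : B) (h : H) {n : ℕ} (h1 h2 h3 h4 h5 h6 : Fin n → H),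
      IsRep6 k H h h1 h2 h3 h4 h5 h6 →
      ∑ i, b * act (h1 i) b' * act (h2 i) (σi (𝑺 (h5 i)) (h6 i)) * σ (h3 i) (𝑺 (h4 i))
        = b * act h b') := by
  have hφ' : ∀ (b b' : B) (h : H), φ (b ⊗ₜ[k] (b' ⊗ₜ[k] h)) = sw k h fun l1 t => sw k t fun l2 l3 =>
      b ⊗ₜ[k] ((b' * σi (𝑺 l2) l3) ⊗ₜ[k] l1) := by
    intro b b' h
    obtain ⟨n, h1, h2, h3, hr⟩ := exists_rep3 k h
    rw [hφ b b' h h1 h2 h3 hr,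
      hr.sum_eq k fun l1 l2 l3 => b ⊗ₜ[k] ((b' * σi (𝑺 l2) l3) ⊗ₜ[k] l1)]
    · exact fun _ _ => ⟨by simp [TensorProduct.tmul_add], by simp⟩
    · exact fun _ _ => ⟨by simp [TensorProduct.tmul_add, TensorProduct.add_tmul, mul_add],
        by simp [← TensorProduct.smul_tmul']⟩
    · exact fun _ _ => ⟨by simp [TensorProduct.tmul_add, TensorProduct.add_tmul, mul_add],
        by simp [← TensorProduct.smul_tmul']⟩
  have hψ' : ∀ (b b' : B) (h : H), ψ (b ⊗ₜ[k] (b' ⊗ₜ[k] h)) = sw k h fun l1 t => sw k t fun l2 u =>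
      sw k u fun l3 l4 => b ⊗ₜ[k] ((b' * act (𝑺 l2) (σ l3 (𝑺 l4))) ⊗ₜ[k] l1) := by
    intro b b' h
    obtain ⟨n, h1, h2, h3, h4, hr⟩ := exists_rep4 k h
    rw [hψ b b' h h1 h2 h3 h4 hr,
      hr.sum_eq k fun l1 l2 l3 l4 => b ⊗ₜ[k] ((b' * act (𝑺 l2) (σ l3 (𝑺 l4))) ⊗ₜ[k] l1)]
    · exact fun _ _ _ => ⟨by simp [TensorProduct.tmul_add], by simp⟩
    all_goals exact fun _ _ _ => ⟨by simp [TensorProduct.tmul_add, TensorProduct.add_tmul, mul_add],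
        by simp [← TensorProduct.smul_tmul']⟩
  -- `w ↦ b ⊗ b'w ⊗ l`, used to pull the scalar identities out of the tensors
  let L : B → B → H → B →ₗ[k] B ⊗[k] (B ⊗[k] H) := fun b b' l =>
    TensorProduct.mk k B (B ⊗[k] H) b ∘ₗ (TensorProduct.mk k B H).flip l ∘ₗ LinearMap.mulLeft k b'
  have hL : ∀ b b' l w, L b b' l w = b ⊗ₜ[k] ((b' * w) ⊗ₜ[k] l) := fun _ _ _ _ => rfl
  have collapse : ∀ (b b' : B) (h : H),
      sw k h (fun l y => L b b' l (Coalgebra.counit (R := k) y • (1 : B)))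
        = b ⊗ₜ[k] (b' ⊗ₜ[k] h) := by
    intro b b' h
    simp only [map_smul]
    simp only [hL, mul_one]
    exact sw_counit_right k h (fun l => b ⊗ₜ[k] (b' ⊗ₜ[k] l))
      ⟨by simp [TensorProduct.tmul_add], by simp⟩
  have hφψ : φ ∘ₗ ψ = LinearMap.id :=
    TensorProduct.ext (LinearMap.ext fun b => TensorProduct.ext' fun b' h => by
      change φ (ψ (b ⊗ₜ[k] (b' ⊗ₜ[k] h))) = b ⊗ₜ[k] (b' ⊗ₜ[k] h)
      rw [hψ']
      refine Eq.trans ?_ (collapse b b' h)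
      simp only [← hcd.φψ_scalar hassoc]
      simp only [map_sw, hφ']
      simp only [hL]
      have e : ∀ x u, sw k u (fun p v => sw k v fun q r => sw k x fun l1 s => sw k s fun l2 l3 =>
            b ⊗ₜ[k] ((b' * act (𝑺 p) (σ q (𝑺 r)) * σi (𝑺 l2) l3) ⊗ₜ[k] l1))
          = sw k u fun p v => sw k x fun l1 s => sw k v fun q r => sw k s fun l2 l3 =>
            b ⊗ₜ[k] ((b' * act (𝑺 p) (σ q (𝑺 r)) * σi (𝑺 l2) l3) ⊗ₜ[k] l1) := fun x u =>
        sw_congr k fun p v => sw_comm k v x _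
      rw [sw_congr k e, sw_coassoc' k h fun l1 s p v => sw k v fun q r => sw k s fun l2 l3 =>
        b ⊗ₜ[k] ((b' * act (𝑺 p) (σ q (𝑺 r)) * σi (𝑺 l2) l3) ⊗ₜ[k] l1)]
      refine sw_congr k fun l1 y => ?_
      have e' : ∀ s u, sw k u (fun p v => sw k v fun q r => sw k s fun l2 l3 =>
            b ⊗ₜ[k] ((b' * act (𝑺 p) (σ q (𝑺 r)) * σi (𝑺 l2) l3) ⊗ₜ[k] l1))
          = sw k u fun p v => sw k s fun l2 l3 => sw k v fun q r =>
            b ⊗ₜ[k] ((b' * act (𝑺 p) (σ q (𝑺 r)) * σi (𝑺 l2) l3) ⊗ₜ[k] l1) := fun s u =>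
        sw_congr k fun p v => sw_comm k v s _
      rw [sw_congr k e', sw_coassoc' k y fun l2 l3 p v => sw k v fun q r =>
        b ⊗ₜ[k] ((b' * act (𝑺 p) (σ q (𝑺 r)) * σi (𝑺 l2) l3) ⊗ₜ[k] l1)]
      simp only [mul_assoc])
  have hψφ : ψ ∘ₗ φ = LinearMap.id :=
    TensorProduct.ext (LinearMap.ext fun b => TensorProduct.ext' fun b' h => by
      change ψ (φ (b ⊗ₜ[k] (b' ⊗ₜ[k] h))) = b ⊗ₜ[k] (b' ⊗ₜ[k] h)
      rw [hφ']
      refine Eq.trans ?_ (collapse b b' h)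
      simp only [← hcd.ψφ_scalar hassoc]
      simp only [map_sw, hψ']
      simp only [hL, sw_coassoc', mul_assoc])
  refine ⟨fun X => ⟨LinearMap.congr_fun hφψ X, LinearMap.congr_fun hψφ X⟩, ?_⟩
  intro b b' h n h1 h2 h3 h4 h5 h6 hr
  rw [hr.sum_eq k fun l1 l2 l3 l4 l5 l6 =>
    b * act l1 b' * act l2 (σi (𝑺 l5) l6) * σ l3 (𝑺 l4)]
  · simp only [mul_assoc (b * act _ b'), ← mul_sw, hcd.act_σi_mul_σ_antipode, mul_smul_comm, mul_one]
    exact sw_counit_right k h (fun l => b * act l b') ⟨by simp [mul_add], by simp⟩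
  all_goals exact fun _ _ _ _ _ => ⟨by simp [mul_add, add_mul], by simp⟩

end Statements
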